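/- Let R be an associative ring with unity. If the class of flat left R-modules is λ-categorical in some cardinal λ > card(R) + ℵ₀, then every countably generated flat left R-module is projective (and hence R is left perfect). -/

import Mathlib

/-! Statement 10: if the class of flat left `R`-modules is categorical in some cardinal
`> card R + ℵ₀`, then every countably generated flat left `R`-module is projective, and
hence `R` is left perfect (every flat left `R`-module is projective).  Since this version
of Mathlib only has flatness over commutative rings, we define the balanced tensor
product of a right module and a left module over an arbitrary ring and flatness via it. -/

universe u

open Cardinal TensorProduct

variable (R : Type u) [Ring R]

/-- The subgroup of `A ⊗[ℤ] M` by which one quotients to obtain the balanced tensor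
product `A ⊗[R] M` of a right `R`-module `A` and a left `R`-module `M`. -/
noncomputable def balancedRel (A : Type u) [AddCommGroup A] [Module Rᵐᵒᵖ A]
    (M : Type u) [AddCommGroup M] [Module R M] : AddSubgroup (A ⊗[ℤ] M) :=
  AddSubgroup.closure
    {x | ∃ (a : A) (r : R) (m : M),
      x = (MulOpposite.op r • a) ⊗ₜ[ℤ] m - a ⊗ₜ[ℤ] (r • m)}

/-- The balanced tensor product `A ⊗[R] M` of a right `R`-module `A` and a left
`R`-module `M`, as an abelian group. -/
noncomputable def BalancedTensor (A : Type u) [AddCommGroup A] [Module Rᵐᵒᵖ A]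
    (M : Type u) [AddCommGroup M] [Module R M] : Type u :=
  (A ⊗[ℤ] M) ⧸ balancedRel R A M

noncomputable instance (A : Type u) [AddCommGroup A] [Module Rᵐᵒᵖ A]
    (M : Type u) [AddCommGroup M] [Module R M] :
    AddCommGroup (BalancedTensor R A M) :=
  QuotientAddGroup.Quotient.addCommGroup _

/-- The map `A ⊗[R] M → B ⊗[R] M` induced on balanced tensor products by a map
`f : A → B` of right `R`-modules. -/
noncomputable def tensorMap {A B : Type u} [AddCommGroup A] [Module Rᵐᵒᵖ A]
    [AddCommGroup B] [Module Rᵐᵒᵖ B] (M : Type u) [AddCommGroup M] [Module R M]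
    (f : A →ₗ[Rᵐᵒᵖ] B) : BalancedTensor R A M →+ BalancedTensor R B M :=
  QuotientAddGroup.map _ _
    (LinearMap.rTensor M f.toAddMonoidHom.toIntLinearMap).toAddMonoidHom
    (by
      rw [balancedRel, AddSubgroup.closure_le]
      rintro x ⟨a, r, m, rfl⟩
      simp only [SetLike.mem_coe, AddSubgroup.mem_comap, map_sub,
        LinearMap.toAddMonoidHom_coe, LinearMap.rTensor_tmul,
        AddMonoidHom.coe_toIntLinearMap, LinearMap.toAddMonoidHom_coe]
      refine AddSubgroup.subset_closure ⟨f a, r, m, ?_⟩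
      rw [map_smul])

/-- A left `R`-module `M` is flat if tensoring any injective map of right `R`-modules
with `M` yields an injective map. -/
def IsFlatModule (M : Type u) [AddCommGroup M] [Module R M] : Prop :=
  ∀ (A B : Type u) [AddCommGroup A] [Module Rᵐᵒᵖ A] [AddCommGroup B] [Module Rᵐᵒᵖ B]
    (f : A →ₗ[Rᵐᵒᵖ] B), Function.Injective f → Function.Injective (tensorMap R M f)

/-- A class `K` of left `R`-modules is `c`-categorical if it contains a module of
cardinality `c` and any two modules in `K` of cardinality `c` are isomorphic. -/
def Categorical (K : ModuleCat.{u} R → Prop) (c : Cardinal.{u}) : Prop :=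
  (∃ M : ModuleCat.{u} R, K M ∧ #M = c) ∧
    ∀ M N : ModuleCat.{u} R, K M → K N → #M = c → #N = c → Nonempty (M ≃ₗ[R] N)



/-- equational flatness -/
def EqFlat (R : Type u) [Ring R] (M : Type u) [AddCommGroup M] [Module R M] : Prop :=
  ∀ (ι : Type) [Fintype ι] (r : ι → R) (m : ι → M), ∑ i, r i • m i = 0 →
    ∃ (κ : Type) (_ : Fintype κ) (a : ι → κ → R) (y : κ → M),
      (∀ i, m i = ∑ j, a i j • y j) ∧ ∀ j, ∑ i, r i * a i j = 0

theorem EqFlat.system {R : Type u} [Ring R] {M : Type u} [AddCommGroup M] [Module R M]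
    (h : EqFlat R M) {B : Type u} (T : Finset B) (ι : Type) [Fintype ι] (c : ι → B → R) (m : ι → M)
    (hm : ∀ b ∈ T, ∑ i, c i b • m i = 0) :
    ∃ (κ : Type) (_ : Fintype κ) (a : ι → κ → R) (y : κ → M),
      (∀ i, m i = ∑ j, a i j • y j) ∧ ∀ b ∈ T, ∀ j, ∑ i, c i b * a i j = 0 := by
  classical
  induction T using Finset.induction_on with
  | empty =>
    refine ⟨ι, inferInstance, fun i j => if i = j then 1 else 0, m, ?_, by simp⟩
    intro i
    simp
  | insert b T hb ih =>
    obtain ⟨κ, _, a, y, h1, h2⟩ := ih (fun b' hb' => hm b' (by simp [hb']))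
    have h3 : ∑ l, (∑ i, c i b * a i l) • y l = 0 := by
      have := hm b (by simp)
      simp only [h1, Finset.smul_sum, smul_smul] at this
      rw [Finset.sum_comm] at this
      simpa only [Finset.sum_smul] using this
    obtain ⟨κ', _, a', y', h4, h5⟩ := h κ _ y h3
    refine ⟨κ', inferInstance, fun i j => ∑ l, a i l * a' l j, y', ?_, ?_⟩
    · intro i
      rw [h1 i]
      simp only [Finset.sum_smul]
      rw [Finset.sum_comm]
      refine Finset.sum_congr rfl fun l _ => ?_
      conv_lhs => rw [h4 l]
      simp [Finset.smul_sum, smul_smul]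
    · have key : ∀ b' j, ∑ i, c i b' * ∑ l, a i l * a' l j
          = ∑ l, (∑ i, c i b' * a i l) * a' l j := by
        intro b' j
        simp only [Finset.mul_sum, Finset.sum_mul]
        rw [Finset.sum_comm]
        simp only [mul_assoc]
      intro b' hb' j
      rw [key]
      rcases Finset.mem_insert.1 hb' with rfl | hb'
      · exact h5 j
      · simp [h2 b' hb']

/-- evaluation of the free right module on `B` -/
noncomputable def evB (R : Type u) [Ring R] (B : Type u) [AddCommGroup B] [Module Rᵐᵒᵖ B] :
    (B →₀ R) →+ B :=
  Finsupp.liftAddHom (fun b => ((smulAddHom Rᵐᵒᵖ B).flip b).comp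
    (MulOpposite.opAddEquiv : R ≃+ Rᵐᵒᵖ).toAddMonoidHom)

theorem evB_single (R : Type u) [Ring R] (B : Type u) [AddCommGroup B] [Module Rᵐᵒᵖ B]
    (b : B) (r : R) : evB R B (Finsupp.single b r) = MulOpposite.op r • b := by
  simp [evB]

/-- right multiplication -/
noncomputable def smB {R : Type u} [Ring R] {M : Type u} [AddCommGroup M] [Module R M]
    (B : Type u) (y : M) : (B →₀ R) →+ (B →₀ M) :=
  Finsupp.mapRange.addMonoidHom ((smulAddHom R M).flip y)

theorem smB_single {R : Type u} [Ring R] {M : Type u} [AddCommGroup M] [Module R M]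
    (B : Type u) (y : M) (b : B) (r : R) : smB B y (Finsupp.single b r) = Finsupp.single b (r • y) := by
  simp [smB]

theorem smB_apply {R : Type u} [Ring R] {M : Type u} [AddCommGroup M] [Module R M]
    (B : Type u) (y : M) (b : B) (k : B →₀ R) : smB B y k b = k b • y := by
  simp [smB]

theorem evB_smB (R : Type u) [Ring R] (B : Type u) [AddCommGroup B] [Module Rᵐᵒᵖ B]
    (k : B →₀ R) (r : R) : evB R B (smB B r k) = MulOpposite.op r • evB R B k := by
  induction k using Finsupp.induction_linear with
  | zero => simp
  | add f g hf hg => simp [hf, hg]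
  | single b s => rw [smB_single, evB_single, evB_single, smul_smul]; simp

/-- relation subgroup -/
noncomputable def relW (R : Type u) [Ring R] (B : Type u) [AddCommGroup B] [Module Rᵐᵒᵖ B]
    (M : Type u) [AddCommGroup M] [Module R M] : AddSubgroup (B →₀ M) :=
  AddSubgroup.closure {x | ∃ (k : B →₀ R) (y : M), evB R B k = 0 ∧ x = smB B y k}

theorem mem_relW {R : Type u} [Ring R] {B : Type u} [AddCommGroup B] [Module Rᵐᵒᵖ B]
    {M : Type u} [AddCommGroup M] [Module R M] {x : B →₀ M} (hx : x ∈ relW R B M) :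
    ∃ (ι : Type) (_ : Fintype ι) (k : ι → B →₀ R) (y : ι → M), (∀ i, evB R B (k i) = 0) ∧
      x = ∑ i, smB B (y i) (k i) := by
  induction hx using AddSubgroup.closure_induction with
  | mem x hx =>
    obtain ⟨k, y, h1, h2⟩ := hx
    exact ⟨Unit, inferInstance, fun _ => k, fun _ => y, fun _ => h1, by simpa using h2⟩
  | zero => exact ⟨Empty, inferInstance, Empty.elim, Empty.elim, fun i => i.elim, by simp⟩
  | add x y _ _ hx hy =>
    obtain ⟨ι, _, k, z, h1, h2⟩ := hx
    obtain ⟨ι', _, k', z', h1', h2'⟩ := hy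
    exact ⟨ι ⊕ ι', inferInstance, Sum.elim k k', Sum.elim z z', by
      rintro (i | i) <;> simp [h1, h1'], by simp [h2, h2']⟩
  | neg x _ hx =>
    obtain ⟨ι, _, k, z, h1, h2⟩ := hx
    exact ⟨ι, inferInstance, fun i => - k i, z, by simp [h1], by simp [h2]⟩

/-- comparison map -/
noncomputable def cmpMap (R : Type u) [Ring R] (B : Type u) [AddCommGroup B] [Module Rᵐᵒᵖ B]
    (M : Type u) [AddCommGroup M] [Module R M] : (B ⊗[ℤ] M) →ₗ[ℤ] ((B →₀ M) ⧸ relW R B M) :=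
  TensorProduct.lift (AddMonoidHom.toIntLinearMap
    { toFun := fun b => AddMonoidHom.toIntLinearMap
        ((QuotientAddGroup.mk' (relW R B M)).comp (Finsupp.singleAddHom b))
      map_zero' := by
        ext m
        simp only [AddMonoidHom.coe_toIntLinearMap, AddMonoidHom.comp_apply,
          Finsupp.singleAddHom_apply, LinearMap.zero_apply, QuotientAddGroup.mk'_apply]
        rw [QuotientAddGroup.eq_zero_iff]
        exact AddSubgroup.subset_closure ⟨Finsupp.single 0 1, m, by simp [evB_single], by
          simp [smB_single]⟩
      map_add' := by
        intro b b'
        ext m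
        simp only [AddMonoidHom.coe_toIntLinearMap, AddMonoidHom.comp_apply,
          Finsupp.singleAddHom_apply, LinearMap.add_apply, QuotientAddGroup.mk'_apply]
        rw [← QuotientAddGroup.mk_add, ← sub_eq_zero, ← QuotientAddGroup.mk_sub,
          QuotientAddGroup.eq_zero_iff]
        exact AddSubgroup.subset_closure ⟨Finsupp.single (b + b') 1 -
          (Finsupp.single b 1 + Finsupp.single b' 1), m, by simp [evB_single], by
          simp [smB_single]⟩ } )

theorem cmpMap_tmul (R : Type u) [Ring R] (B : Type u) [AddCommGroup B] [Module Rᵐᵒᵖ B]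
    (M : Type u) [AddCommGroup M] [Module R M] (b : B) (m : M) :
    cmpMap R B M (b ⊗ₜ m) = QuotientAddGroup.mk' (relW R B M) (Finsupp.single b m) := rfl

theorem cmpMap_rel (R : Type u) [Ring R] (B : Type u) [AddCommGroup B] [Module Rᵐᵒᵖ B]
    (M : Type u) [AddCommGroup M] [Module R M] (x : B ⊗[ℤ] M) (hx : x ∈ balancedRel R B M) :
    cmpMap R B M x = 0 := by
  induction hx using AddSubgroup.closure_induction with
  | mem x hx =>
    obtain ⟨b, r, m, rfl⟩ := hx
    rw [map_sub, cmpMap_tmul, cmpMap_tmul, ← map_sub, QuotientAddGroup.mk'_apply,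
      QuotientAddGroup.eq_zero_iff]
    exact AddSubgroup.subset_closure ⟨Finsupp.single (MulOpposite.op r • b) 1 -
          Finsupp.single b r, m, by simp [evB_single], by
          simp [smB_single]⟩
  | zero => simp
  | add x y _ _ hx hy => simp [hx, hy]
  | neg x _ hx => simp [hx]

theorem vanish0 {R : Type u} [Ring R] {B : Type u} [AddCommGroup B] [Module Rᵐᵒᵖ B]
    {M : Type u} [AddCommGroup M] [Module R M] {α : Type} [Fintype α] (b : α → B) (m : α → M)
    (h : ∑ i, b i ⊗ₜ[ℤ] m i ∈ balancedRel R B M) :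
    ∃ (ι : Type) (_ : Fintype ι) (k : ι → B →₀ R) (y : ι → M), (∀ i, evB R B (k i) = 0) ∧
      ∑ i, Finsupp.single (b i) (m i) = ∑ i, smB B (y i) (k i) := by
  apply mem_relW
  have := cmpMap_rel R B M _ h
  simp only [map_sum, cmpMap_tmul] at this
  rw [← map_sum, QuotientAddGroup.mk'_apply, QuotientAddGroup.eq_zero_iff] at this
  exact this

theorem vanish {R : Type u} [Ring R] {B : Type u} [AddCommGroup B] [Module Rᵐᵒᵖ B]
    {M : Type u} [AddCommGroup M] [Module R M] (hM : EqFlat R M)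
    {α : Type} [Fintype α] (b : α → B) (m : α → M)
    (h : ∑ i, b i ⊗ₜ[ℤ] m i ∈ balancedRel R B M) :
    ∃ (κ : Type) (_ : Fintype κ) (a : α → κ → R) (y : κ → M), (∀ i, m i = ∑ j, a i j • y j) ∧
      ∀ j, ∑ i, MulOpposite.op (a i j) • b i = 0 := by
  classical
  obtain ⟨ι, _, k, y, h1, h2⟩ := vanish0 b m h
  let K : α ⊕ ι → B →₀ R := Sum.elim (fun i => Finsupp.single (b i) 1) (fun j => - k j)
  let w : α ⊕ ι → M := Sum.elim m y
  have hK : ∑ i, smB B (w i) (K i) = 0 := by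
    simp [K, w, smB_single, h2]
  let T : Finset B := Finset.univ.biUnion fun i => (K i).support
  obtain ⟨κ, _, a, z, h3, h4⟩ := hM.system T (α ⊕ ι) (fun i b => K i b) w (by
    intro b _
    have := DFunLike.congr_fun hK b
    simpa [Finsupp.finsetSum_apply, smB_apply] using this)
  have h5 : ∀ j, ∑ i, smB B (a i j) (K i) = 0 := by
    intro j
    ext b
    rw [Finsupp.finsetSum_apply]
    simp only [smB_apply, smul_eq_mul, Finsupp.coe_zero, Pi.zero_apply]
    by_cases hb : b ∈ T
    · exact h4 b hb j
    · refine Finset.sum_eq_zero fun i _ => ?_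
      have : K i b = 0 := by
        by_contra hne
        exact hb (Finset.mem_biUnion.2 ⟨i, Finset.mem_univ _, by simpa using hne⟩)
      simp [this]
  refine ⟨κ, inferInstance, fun i => a (Sum.inl i), z, fun i => h3 (Sum.inl i), fun j => ?_⟩
  have := congrArg (evB R B) (h5 j)
  simpa [evB_smB, K, evB_single, h1] using this

/-- the quotient map -/
noncomputable def bmk (R : Type u) [Ring R] (B : Type u) [AddCommGroup B] [Module Rᵐᵒᵖ B]
    (M : Type u) [AddCommGroup M] [Module R M] : (B ⊗[ℤ] M) →+ BalancedTensor R B M :=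
  QuotientAddGroup.mk' (balancedRel R B M)

theorem bmk_surjective (R : Type u) [Ring R] (B : Type u) [AddCommGroup B] [Module Rᵐᵒᵖ B]
    (M : Type u) [AddCommGroup M] [Module R M] : Function.Surjective (bmk R B M) :=
  QuotientAddGroup.mk'_surjective _

theorem bmk_eq_zero {R : Type u} [Ring R] {B : Type u} [AddCommGroup B] [Module Rᵐᵒᵖ B]
    {M : Type u} [AddCommGroup M] [Module R M] {x : B ⊗[ℤ] M} :
    bmk R B M x = 0 ↔ x ∈ balancedRel R B M :=
  QuotientAddGroup.eq_zero_iff x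

theorem tensorMap_bmk {R : Type u} [Ring R] {A B : Type u} [AddCommGroup A] [Module Rᵐᵒᵖ A]
    [AddCommGroup B] [Module Rᵐᵒᵖ B]
    {M : Type u} [AddCommGroup M] [Module R M] (f : A →ₗ[Rᵐᵒᵖ] B) (x : A ⊗[ℤ] M) :
    tensorMap R M f (bmk R A M x) =
      bmk R B M (LinearMap.rTensor M f.toAddMonoidHom.toIntLinearMap x) := rfl

theorem mk_tmul_smul {R : Type u} [Ring R] {B : Type u} [AddCommGroup B] [Module Rᵐᵒᵖ B]
    {M : Type u} [AddCommGroup M] [Module R M] (b : B) (r : R) (m : M) :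
    bmk R B M (b ⊗ₜ[ℤ] (r • m)) = bmk R B M ((MulOpposite.op r • b) ⊗ₜ[ℤ] m) := by
  symm
  rw [← sub_eq_zero, ← map_sub, bmk_eq_zero]
  exact AddSubgroup.subset_closure ⟨b, r, m, rfl⟩

theorem exists_fin_tmul {A M : Type u} [AddCommGroup A] [AddCommGroup M] (x : A ⊗[ℤ] M) :
    ∃ (α : Type) (_ : Fintype α) (a : α → A) (m : α → M), x = ∑ i, a i ⊗ₜ[ℤ] m i := by
  induction x using TensorProduct.induction_on with
  | zero => exact ⟨Empty, inferInstance, Empty.elim, Empty.elim, by simp⟩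
  | tmul a m => exact ⟨Unit, inferInstance, fun _ => a, fun _ => m, by simp⟩
  | add x y hx hy =>
    obtain ⟨α, _, a, m, rfl⟩ := hx
    obtain ⟨β, _, b, n, rfl⟩ := hy
    exact ⟨α ⊕ β, inferInstance, Sum.elim a b, Sum.elim m n, by simp⟩

theorem EqFlat.isFlat {R : Type u} [Ring R] {M : Type u} [AddCommGroup M] [Module R M]
    (hM : EqFlat R M) : IsFlatModule R M := by
  intro A B _ _ _ _ f hf
  rw [injective_iff_map_eq_zero]
  intro x hx
  obtain ⟨x, rfl⟩ := bmk_surjective R A M x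
  obtain ⟨α, _, a, m, rfl⟩ := exists_fin_tmul x
  have h1 : ∑ i, f (a i) ⊗ₜ[ℤ] m i ∈ balancedRel R B M := by
    rw [tensorMap_bmk, bmk_eq_zero] at hx
    simpa using hx
  obtain ⟨κ, _, s, y, h2, h3⟩ := vanish hM _ _ h1
  have h4 : ∀ j, ∑ i, MulOpposite.op (s i j) • a i = 0 := by
    intro j
    apply hf
    simpa using h3 j
  have h5 : ∀ i, bmk R A M (a i ⊗ₜ[ℤ] m i) =
      ∑ j, bmk R A M ((MulOpposite.op (s i j) • a i) ⊗ₜ[ℤ] y j) := by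
    intro i
    conv_lhs => rw [h2 i]
    rw [TensorProduct.tmul_sum, map_sum]
    simp only [mk_tmul_smul]
  rw [map_sum]
  simp only [h5]
  rw [Finset.sum_comm]
  simp only [← map_sum, ← TensorProduct.sum_tmul, h4]
  simp

theorem IsFlatModule.eqFlat {R : Type u} [Ring R] {M : Type u} [AddCommGroup M] [Module R M]
    (hM : IsFlatModule R M) : EqFlat R M := by
  classical
  intro ι _ r m h0
  let φ : (ι → R) →ₗ[Rᵐᵒᵖ] R :=
    { toFun := fun k => ∑ i, r i * k i
      map_add' := by intro x y; simp [mul_add, Finset.sum_add_distrib]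
      map_smul' := by intro x y; simp [Finset.sum_mul, mul_assoc] }
  have hφ : ∀ k, φ k = ∑ i, r i * k i := fun _ => rfl
  let A := LinearMap.range φ
  have hr : ∀ i, φ (Pi.single i 1) = r i := by
    intro i
    rw [hφ]
    simp [Pi.single_apply]
  let b : ι → A := fun i => ⟨r i, ⟨Pi.single i 1, hr i⟩⟩
  have key : ∑ i, b i ⊗ₜ[ℤ] m i ∈ balancedRel R A M := by
    rw [← bmk_eq_zero]
    apply hM A R A.subtype A.injective_subtype
    rw [map_zero, tensorMap_bmk]
    have : ∀ i, bmk R R M (r i ⊗ₜ[ℤ] m i) =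
        bmk R R M (1 ⊗ₜ[ℤ] (r i • m i)) := by
      intro i
      rw [mk_tmul_smul]; simp
    have h2 : bmk R R M (∑ i, r i ⊗ₜ[ℤ] m i) = 0 := by
      rw [map_sum]
      simp only [this]
      rw [← map_sum, ← TensorProduct.tmul_sum, h0]
      simp
    refine Eq.trans ?_ h2
    congr 1
    simp [b]
  obtain ⟨κ, _, k, y, h1, h2⟩ := vanish0 b m key
  choose σ hσ using fun a : A => a.2
  -- push forward along σ
  let Φ : (A →₀ R) →+ (ι → R) :=
    Finsupp.liftAddHom (fun a => 
      { toFun := fun s => fun l => σ a l * s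
        map_zero' := by ext; simp
        map_add' := by intros; ext; simp [mul_add] })
  let Ψ : (A →₀ M) →+ (ι → M) :=
    Finsupp.liftAddHom (fun a => 
      { toFun := fun s => fun l => σ a l • s
        map_zero' := by ext; simp
        map_add' := by intros; ext; simp })
  have hΦs : ∀ a s, Φ (Finsupp.single a s) = fun l => σ a l * s := by
    intro a s
    simp only [Φ]
    rw [Finsupp.liftAddHom_apply_single]
    rfl
  have hΨs : ∀ a s, Ψ (Finsupp.single a s) = fun l => σ a l • s := by
    intro a s
    simp only [Ψ]
    rw [Finsupp.liftAddHom_apply_single]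
    rfl
  have hΨ : ∀ (y : M) (k : A →₀ R) l, Ψ (smB A y k) l = Φ k l • y := by
    intro y k l
    induction k using Finsupp.induction_linear with
    | zero => simp
    | add f g hf hg => simp [hf, hg, add_smul]
    | single b s => rw [smB_single, hΨs, hΦs]; simp [smul_smul]
  have hφΦ : ∀ k, φ (Φ k) = (evB R A k : A) := by
    intro k
    induction k using Finsupp.induction_linear with
    | zero => simp
    | add f g hf hg => simp [hf, hg]
    | single b s =>
      rw [hΦs, evB_single]
      have : (fun l => σ b l * s) = MulOpposite.op s • σ b := by ext; simp
      rw [this, map_smul, hσ]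
      rfl
  have h3 := congrArg Ψ h2
  simp only [map_sum, hΨs] at h3
  refine ⟨ι ⊕ κ, inferInstance, fun l => Sum.elim
    (fun i => (Pi.single i 1 : ι → R) l - σ (b i) l) (fun j => Φ (k j) l), Sum.elim m y, ?_, ?_⟩
  · intro l
    have h4 := congrFun h3 l
    simp only [Finset.sum_apply, hΨ] at h4
    simp only [Fintype.sum_sum_type, Sum.elim_inl, Sum.elim_inr, ← h4, sub_smul,
      Finset.sum_sub_distrib]
    simp [Pi.single_apply]
  · rintro (i | j)
    · have : φ (Pi.single i 1 - σ (b i)) = 0 := by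
        rw [map_sub, hr, hσ]; simp [b]
      rw [hφ] at this
      simpa using this
    · have := hφΦ (k j)
      rw [h1, hφ] at this
      simpa using this

theorem mk_span_le_kappa {R : Type u} [Ring R] {M : Type u} [AddCommGroup M] [Module R M]
    (κ : Cardinal.{u}) (hR : #R ≤ κ) (h0 : ℵ₀ ≤ κ) (s : Set M) (hs : #s ≤ κ) :
    #(Submodule.span R s) ≤ κ := by
  have h1 : Function.Surjective (fun l : List (R × s) =>
      (⟨(l.map fun p => p.1 • (p.2 : M)).sum, by
        refine list_sum_mem ?_
        intro x hx
        obtain ⟨p, _, rfl⟩ := List.mem_map.1 hx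
        exact Submodule.smul_mem _ _ (Submodule.subset_span p.2.2)⟩ : Submodule.span R s)) := by
    rintro ⟨x, hx⟩
    have : ∃ l : List (R × s), (l.map fun p => p.1 • (p.2 : M)).sum = x := by
      induction hx using Submodule.span_induction with
      | mem x hx => exact ⟨[(1, ⟨x, hx⟩)], by simp⟩
      | zero => exact ⟨[], by simp⟩
      | add x y _ _ hx hy =>
        obtain ⟨l, rfl⟩ := hx
        obtain ⟨l', rfl⟩ := hy
        exact ⟨l ++ l', by simp⟩
      | smul a x _ hx =>
        obtain ⟨l, rfl⟩ := hx
        clear * -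
        refine ⟨l.map fun p => (a * p.1, p.2), ?_⟩
        induction l with
        | nil => simp
        | cons p l ih =>
          simp only [List.map_cons, List.sum_cons, smul_add, mul_smul]
          rw [ih]
    obtain ⟨l, hl⟩ := this
    exact ⟨l, Subtype.ext hl⟩
  refine (mk_le_of_surjective h1).trans ((mk_list_le_max _).trans (max_le h0 ?_))
  rw [mk_prod, lift_id, lift_id]
  exact (mul_le_mul' hR hs).trans (mul_eq_self h0).le

theorem mk_data_le {R : Type u} {S : Type u} (κ : Cardinal.{u}) (hR : #R ≤ κ) (h0 : ℵ₀ ≤ κ)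
    (hs : #S ≤ κ) : #(Σ n : ℕ, (Fin n → R) × (Fin n → S)) ≤ κ := by
  have : Function.Injective (fun d : (Σ n : ℕ, (Fin n → R) × (Fin n → S)) =>
      (List.ofFn d.2.1, List.ofFn d.2.2)) := by
    rintro ⟨n, r, m⟩ ⟨n', r', m'⟩ h
    simp only [Prod.mk.injEq] at h
    have h1 := congrArg List.length h.1
    simp only [List.length_ofFn] at h1
    subst h1
    rw [List.ofFn_injective h.1, List.ofFn_injective h.2]
  refine (mk_le_of_injective this).trans ?_
  rw [mk_prod, lift_id, lift_id]
  exact (mul_le_mul' ((mk_list_le_max _).trans (max_le h0 hR))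
    ((mk_list_le_max _).trans (max_le h0 hs))).trans (mul_eq_self h0).le

theorem exists_closed {R : Type u} [Ring R] {Q : Type u} [AddCommGroup Q] [Module R Q]
    (κ : Cardinal.{u}) (hR : #R ≤ κ) (h0 : ℵ₀ ≤ κ)
    (φ : ∀ n : ℕ, (Fin n → R) → (Fin n → Q) → Set Q) (hφ : ∀ n r m, (φ n r m).Countable) (q : Q) :
    ∃ P : Submodule R Q, q ∈ P ∧ #P ≤ κ ∧ ∀ n r m, (∀ i, m i ∈ P) → φ n r m ⊆ P := by
  let F : Submodule R Q → Submodule R Q := fun S => Submodule.span R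
    ((S : Set Q) ∪ ⋃ d : (Σ n : ℕ, (Fin n → R) × (Fin n → S)), φ d.1 d.2.1 (fun i => d.2.2 i))
  have hF : ∀ S, S ≤ F S := fun S x hx => Submodule.subset_span (Or.inl hx)
  have hFc : ∀ S : Submodule R Q, #S ≤ κ → #(F S) ≤ κ := by
    intro S hS
    apply mk_span_le_kappa κ hR h0
    refine (mk_union_le _ _).trans ((add_le_add hS ?_).trans (add_eq_self h0).le)
    refine (mk_iUnion_le _).trans ((mul_le_mul' (mk_data_le κ hR h0 hS) ?_).trans (mul_eq_self h0).le)
    refine ciSup_le' fun d => ?_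
    exact (hφ _ _ _).le_aleph0.trans h0
  let P : ℕ → Submodule R Q := fun n => F^[n] (Submodule.span R {q})
  have hPs : ∀ n, P (n + 1) = F (P n) := fun n => Function.iterate_succ_apply' _ _ _
  have hmono : Monotone P := monotone_nat_of_le_succ fun n => by rw [hPs]; exact hF _
  have hPc : ∀ n, #(P n) ≤ κ := by
    intro n
    induction n with
    | zero =>
      apply mk_span_le_kappa κ hR h0
      exact (mk_singleton q).le.trans (one_le_aleph0.trans h0)
    | succ n ih => rw [hPs]; exact hFc _ ih
  have hmem : ∀ x, x ∈ (⨆ n, P n) ↔ ∃ n, x ∈ P n := fun x =>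
    Submodule.mem_iSup_of_directed _ hmono.directed_le
  refine ⟨⨆ n, P n, (hmem q).2 ⟨0, Submodule.subset_span rfl⟩, ?_, ?_⟩
  · have : ((⨆ n, P n : Submodule R Q) : Set Q) = ⋃ n : ULift.{u} ℕ, (P n.down : Set Q) := by
      ext x
      simp [hmem]
    change #((⨆ n, P n : Submodule R Q) : Set Q) ≤ κ
    rw [this]
    refine (mk_iUnion_le _).trans ((mul_le_mul' ?_ (ciSup_le' fun d => hPc _)).trans
      (mul_eq_self h0).le)
    simpa using h0
  · intro n r m hm
    choose N hN using fun i => (hmem _).1 (hm i)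
    let K := Finset.univ.sup N
    have hK : ∀ i, m i ∈ P K := fun i => hmono (Finset.le_sup (Finset.mem_univ i)) (hN i)
    intro x hx
    refine (hmem x).2 ⟨K + 1, ?_⟩
    rw [hPs]
    refine Submodule.subset_span (Or.inr (Set.mem_iUnion.2 ⟨⟨n, r, fun i => ⟨m i, hK i⟩⟩, hx⟩))

theorem EqFlat.of_fin {R : Type u} [Ring R] {M : Type u} [AddCommGroup M] [Module R M]
    (h : ∀ (n : ℕ) (r : Fin n → R) (m : Fin n → M), ∑ i, r i • m i = 0 →
    ∃ (κ : Type) (_ : Fintype κ) (a : Fin n → κ → R) (y : κ → M),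
      (∀ i, m i = ∑ j, a i j • y j) ∧ ∀ j, ∑ i, r i * a i j = 0) : EqFlat R M := by
  intro ι _ r m h0
  let e := Fintype.equivFin ι
  obtain ⟨κ, _, a, y, h1, h2⟩ := h _ (r ∘ e.symm) (m ∘ e.symm) (by
    rw [← h0]; exact Equiv.sum_comp e.symm (fun i => r i • m i))
  refine ⟨κ, inferInstance, fun i => a (e i), y, fun i => by simpa using h1 (e i), fun j => ?_⟩
  rw [← h2 j, ← Equiv.sum_comp e]
  simp

theorem EqFlat.exists_sub {R : Type u} [Ring R] {Q : Type u} [AddCommGroup Q] [Module R Q]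
    (hQ : EqFlat R Q) (κ : Cardinal.{u}) (hR : #R ≤ κ) (h0 : ℵ₀ ≤ κ) (q : Q) :
    ∃ P : Submodule R Q, q ∈ P ∧ #P ≤ κ ∧ EqFlat R P ∧ EqFlat R (Q ⧸ P) := by
  classical
  have H1 : ∀ (n : ℕ) (r : Fin n → R) (m : Fin n → Q), ∃ s : Set Q, s.Countable ∧
      (∑ i, r i • m i = 0 → ∃ (κ : Type) (_ : Fintype κ) (a : Fin n → κ → R) (y : κ → Q),
      (∀ j, y j ∈ s) ∧ (∀ i, m i = ∑ j, a i j • y j) ∧ ∀ j, ∑ i, r i * a i j = 0) := by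
    intro n r m
    by_cases h : ∑ i, r i • m i = 0
    · obtain ⟨κ, _, a, y, h1, h2⟩ := hQ _ r m h
      exact ⟨Set.range y, Set.countable_range y, fun _ =>
        ⟨κ, inferInstance, a, y, fun j => ⟨j, rfl⟩, h1, h2⟩⟩
    · exact ⟨∅, Set.countable_empty, fun h' => absurd h' h⟩
  have H2 : ∀ (n : ℕ) (r : Fin n → R) (m : Fin n → Q), ∃ s : Set Q, s.Countable ∧
      ∀ p, (∀ i, m i = p) → (∃ x : Fin n → Q, ∑ i, r i • x i = p) →
        ∃ x : Fin n → Q, (∀ i, x i ∈ s) ∧ ∑ i, r i • x i = p := by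
    intro n r m
    by_cases h : ∃ x : Fin n → Q, ∀ i, ∑ i, r i • x i = m i
    · obtain ⟨x, hx⟩ := h
      refine ⟨Set.range x, Set.countable_range x, ?_⟩
      rintro p hp ⟨x', hx'⟩
      refine ⟨x, fun i => ⟨i, rfl⟩, ?_⟩
      cases n with
      | zero => rw [← hx']; simp
      | succ n => rw [← hp 0, hx 0]
    · refine ⟨∅, Set.countable_empty, ?_⟩
      rintro p hp ⟨x', hx'⟩
      exact absurd ⟨x', fun i => by rw [hp i, hx']⟩ h
  choose φ hφ hφ' using H1
  choose ψ hψ hψ' using H2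
  obtain ⟨P, hq, hP, hcl⟩ := exists_closed κ hR h0 (fun n r m => φ n r m ∪ ψ n r m)
    (fun n r m => (hφ n r m).union (hψ n r m)) q
  refine ⟨P, hq, hP, ?_, ?_⟩
  · apply EqFlat.of_fin
    intro n r m hm
    obtain ⟨κ', _, a, y, h1, h2, h3⟩ := hφ' n r (fun i => (m i : Q)) (by
      have := congrArg P.subtype hm
      simpa using this)
    refine ⟨κ', inferInstance, a, fun j => ⟨y j, hcl n r _ (fun i => (m i).2) (Or.inl (h1 j))⟩,
      fun i => ?_, h3⟩
    apply Subtype.ext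
    simpa using h2 i
  · apply EqFlat.of_fin
    intro n r m hm
    choose m' hm' using fun i => P.mkQ_surjective (m i)
    have hp : ∑ i, r i • m' i ∈ P := by
      rw [← P.ker_mkQ, LinearMap.mem_ker]
      simpa [hm'] using hm
    obtain ⟨x, hx, hx'⟩ := hψ' n r (fun _ => ∑ i, r i • m' i) _ (fun _ => rfl) ⟨m', rfl⟩
    have hxP : ∀ i, x i ∈ P := fun i => hcl n r _ (fun _ => hp) (Or.inr (hx i))
    obtain ⟨κ', _, a, y, h1, h2⟩ := hQ _ r (fun i => m' i - x i) (by
      simp [smul_sub, hx'])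
    refine ⟨κ', inferInstance, a, fun j => P.mkQ (y j), fun i => ?_, h2⟩
    have h3 := congrArg P.mkQ (h1 i)
    have h4 : P.mkQ (x i) = 0 := by
      rw [← LinearMap.mem_ker, P.ker_mkQ]; exact hxP i
    simpa only [map_sub, h4, sub_zero, hm', map_sum, map_smul] using h3

theorem EqFlat.of_equiv {R : Type u} [Ring R] {M N : Type u} [AddCommGroup M] [Module R M]
    [AddCommGroup N] [Module R N] (h : EqFlat R M) (e : M ≃ₗ[R] N) : EqFlat R N := by
  intro ι _ r m h0
  obtain ⟨κ, _, a, y, h1, h2⟩ := h ι r (fun i => e.symm (m i)) (by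
    have := congrArg e.symm h0
    simpa using this)
  refine ⟨κ, inferInstance, a, fun j => e (y j), fun i => ?_, h2⟩
  have := congrArg e (h1 i)
  simpa using this

theorem EqFlat.prod {R : Type u} [Ring R] {M N : Type u} [AddCommGroup M] [Module R M]
    [AddCommGroup N] [Module R N] (h : EqFlat R M) (h' : EqFlat R N) : EqFlat R (M × N) := by
  intro ι _ r m h0
  obtain ⟨κ, _, a, y, h1, h2⟩ := h ι r (fun i => (m i).1) (by
    have := congrArg (LinearMap.fst R M N) h0
    simpa using this)
  obtain ⟨κ', _, a', y', h1', h2'⟩ := h' ι r (fun i => (m i).2) (by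
    have := congrArg (LinearMap.snd R M N) h0
    simpa using this)
  refine ⟨κ ⊕ κ', inferInstance, fun i => Sum.elim (a i) (a' i),
    Sum.elim (fun j => (y j, 0)) (fun j => (0, y' j)), fun i => ?_, ?_⟩
  · ext
    · simp [h1, Prod.fst_sum]
    · simp [h1', Prod.snd_sum]
  · rintro (j | j) <;> simp [h2, h2']

theorem eqFlat_finsupp {R : Type u} [Ring R] (I : Type u) : EqFlat R (I →₀ R) := by
  classical
  intro ι _ r m h0
  let T : Finset I := Finset.univ.biUnion fun i => (m i).support
  let e := Fintype.equivFin T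
  refine ⟨Fin (Fintype.card T), inferInstance, fun i j => m i (e.symm j),
    fun j => Finsupp.single (e.symm j : I) 1, fun i => ?_, fun j => ?_⟩
  · rw [Equiv.sum_comp e.symm (fun t : T => m i (t : I) • Finsupp.single (t : I) (1 : R)),
      Finset.sum_coe_sort T (fun t => m i t • Finsupp.single t (1 : R))]
    conv_lhs => rw [← Finsupp.sum_single (m i)]
    rw [Finsupp.sum_of_support_subset (s := T)]
    · simp
    · exact Finset.subset_biUnion_of_mem (fun i => (m i).support) (Finset.mem_univ i)
    · simp
  · have := DFunLike.congr_fun h0 (e.symm j : I)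
    simpa [Finsupp.finsetSum_apply] using this

theorem EqFlat.quot_sSup {R : Type u} [Ring R] {M : Type u} [AddCommGroup M] [Module R M]
    (c : Set (Submodule R M)) (hne : c.Nonempty) (hd : DirectedOn (· ≤ ·) c)
    (h : ∀ N ∈ c, EqFlat R (M ⧸ N)) : EqFlat R (M ⧸ sSup c) := by
  intro ι _ r m hm
  choose m' hm' using fun i => (sSup c).mkQ_surjective (m i)
  have hp : ∑ i, r i • m' i ∈ sSup c := by
    rw [← (sSup c).ker_mkQ, LinearMap.mem_ker]
    simpa [hm'] using hm
  obtain ⟨N, hN, hpN⟩ := (Submodule.mem_sSup_of_directed hne hd).1 hp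
  obtain ⟨κ, _, a, y, h1, h2⟩ := h N hN ι r (fun i => N.mkQ (m' i)) (by
    rw [← N.ker_mkQ, LinearMap.mem_ker] at hpN
    simpa using hpN)
  let f : (M ⧸ N) →ₗ[R] M ⧸ sSup c := Submodule.mapQ N (sSup c) LinearMap.id (le_sSup hN)
  refine ⟨κ, inferInstance, a, fun j => f (y j), fun i => ?_, h2⟩
  have h3 := congrArg f (h1 i)
  rw [map_sum] at h3
  rw [← hm' i]
  simpa [f] using h3

theorem sSupIndep_insert' {R : Type u} [Ring R] {M : Type u} [AddCommGroup M] [Module R M]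
    (S : Set (Submodule R M)) (hS : sSupIndep S) (C : Submodule R M) (hC : Disjoint C (sSup S)) :
    sSupIndep (insert C S) := by
  intro x hx
  by_cases hxC : x = C
  · subst hxC
    refine hC.mono_right (sSup_le_sSup ?_)
    rintro y ⟨hy | hy, hyx⟩
    · exact absurd hy hyx
    · exact hy
  · have hxS : x ∈ S := hx.resolve_left hxC
    have h1 : sSup (insert C S \ {x}) ≤ sSup (S \ {x}) ⊔ C := by
      refine sSup_le ?_
      rintro y ⟨hy | hy, hyx⟩
      · rw [hy]; exact le_sup_right
      · exact (le_sSup (show y ∈ S \ {x} from ⟨hy, hyx⟩)).trans le_sup_left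
    refine Disjoint.mono_right h1 ?_
    refine (hS hxS).disjoint_sup_right_of_disjoint_sup_left ?_
    refine hC.symm.mono_left (sup_le (le_sSup hxS) (sSup_le_sSup Set.sdiff_subset))

theorem EqFlat.projective {R : Type u} [Ring R] (κ : Cardinal.{u}) (hR : #R ≤ κ) (h0 : ℵ₀ ≤ κ)
    (hκ : ∀ (P : Type u) [AddCommGroup P] [Module R P], #P ≤ κ → EqFlat R P → Module.Projective R P)
    (M : Type u) [AddCommGroup M] [Module R M] (hM : EqFlat R M) : Module.Projective R M := by
  classical
  obtain ⟨S, -, hS⟩ := zorn_subset_nonempty {S : Set (Submodule R M) | sSupIndep S ∧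
    (∀ P ∈ S, Module.Projective R P) ∧ EqFlat R (M ⧸ sSup S)} (by
      intro c hc hch hne
      refine ⟨⋃₀ c, ⟨iSupIndep_sUnion_of_directed hch.directedOn fun s hs => (hc hs).1,
        fun P ⟨s, hs, hP⟩ => (hc hs).2.1 P hP, ?_⟩, fun _ => Set.subset_sUnion_of_mem⟩
      rw [sSup_sUnion, ← sSup_image]
      apply EqFlat.quot_sSup
      · exact hne.image _
      · rw [directedOn_image]
        exact hch.directedOn.mono @fun s t => sSup_le_sSup
      · rintro _ ⟨s, hs, rfl⟩
        exact (hc hs).2.2) ∅ (by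
      refine ⟨sSupIndep_empty, by simp, ?_⟩
      rw [sSup_empty]
      exact hM.of_equiv (Submodule.quotEquivOfEqBot ⊥ rfl).symm)
  obtain ⟨⟨hind, hproj, hfl⟩, hmax⟩ := hS
  have htop : sSup S = ⊤ := by
    by_contra hne
    obtain ⟨x, hx⟩ : ∃ x, x ∉ sSup S := by
      by_contra hcon
      push Not at hcon
      exact hne (eq_top_iff.2 fun x _ => hcon x)
    set N := sSup S with hN
    obtain ⟨P, hxP, hPc, hPf, hQf⟩ := hfl.exists_sub κ hR h0 (N.mkQ x)
    have := hκ P hPc hPf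
    obtain ⟨g, hg⟩ := Module.projective_lifting_property N.mkQ P.subtype N.mkQ_surjective
    have hg' : ∀ p : P, N.mkQ (g p) = p := fun p => LinearMap.congr_fun hg p
    have hginj : Function.Injective g := by
      intro p p' hpp
      apply Subtype.ext
      rw [← hg', ← hg', hpp]
    let C := LinearMap.range g
    have hCproj : Module.Projective R C :=
      Module.Projective.of_equiv (LinearEquiv.ofInjective g hginj)
    have hdis : Disjoint C N := by
      rw [Submodule.disjoint_def]
      rintro _ ⟨p, rfl⟩ hp
      replace hp := (Submodule.Quotient.mk_eq_zero N).2 hp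
      rw [← Submodule.mkQ_apply, hg'] at hp
      rw [Subtype.ext (a1 := p) (a2 := 0) hp, map_zero]
    have hsup : sSup (insert C S) = C ⊔ N := by rw [sSup_insert]
    have hmap : (C ⊔ N).map N.mkQ = P := by
      rw [Submodule.map_sup]
      have h1 : N.map N.mkQ = ⊥ := by simp
      rw [h1, sup_bot_eq]
      ext z
      constructor
      · rintro ⟨_, ⟨p, rfl⟩, rfl⟩
        rw [hg']; exact p.2
      · intro hz
        exact ⟨g ⟨z, hz⟩, ⟨_, rfl⟩, hg' _⟩
    have hmem : insert C S ⊆ S := by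
      apply hmax _ (Set.subset_insert C S)
      refine ⟨sSupIndep_insert' S hind C hdis, ?_, ?_⟩
      · rintro P' (rfl | hP')
        · exact hCproj
        · exact hproj P' hP'
      · rw [hsup]
        refine EqFlat.of_equiv ?_ (Submodule.quotientQuotientEquivQuotient N (C ⊔ N) le_sup_right)
        rw [hmap]
        exact hQf
    have hCS : C ≤ N := le_sSup (hmem (Set.mem_insert C S))
    have h2 : g ⟨_, hxP⟩ ∈ N := hCS ⟨_, rfl⟩
    replace h2 := (Submodule.Quotient.mk_eq_zero N).2 h2
    rw [← Submodule.mkQ_apply, hg'] at h2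
    exact hx ((Submodule.Quotient.mk_eq_zero N).1 h2)
  have hint := DirectSum.isInternal_submodule_of_iSupIndep_of_iSup_eq_top
    ((sSupIndep_iff S).1 hind) (by rw [← sSup_eq_iSup']; exact htop)
  have : ∀ i : S, Module.Projective R (i : Submodule R M) := fun i => hproj i i.2
  exact Module.Projective.of_equiv
    (LinearEquiv.ofBijective (DirectSum.coeLinearMap (fun i : S => (i : Submodule R M))) hint)

theorem stmt10
    (h : ∃ c : Cardinal.{u}, #R + ℵ₀ < c ∧
      Categorical R (fun M => IsFlatModule R M) c) :
    (∀ (M : Type u) [AddCommGroup M] [Module R M],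
        (∃ s : Set M, s.Countable ∧ Submodule.span R s = ⊤) →
        IsFlatModule R M → Module.Projective R M) ∧
      ∀ (M : Type u) [AddCommGroup M] [Module R M],
        IsFlatModule R M → Module.Projective R M := by

  obtain ⟨c, hc, -, hcat⟩ := h
  have main : ∀ (M : Type u) [AddCommGroup M] [Module R M],
      IsFlatModule R M → Module.Projective R M := by
    intro M _ _ hM
    refine EqFlat.projective (#R + ℵ₀) (self_le_add_right _ _) (self_le_add_left _ _) ?_ M hM.eqFlat
    intro P _ _ hP hPf
    rcases subsingleton_or_nontrivial R with hsub | hnt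
    · have : Subsingleton P := Module.subsingleton R P
      infer_instance
    · have hcω : ℵ₀ ≤ c := (self_le_add_left ℵ₀ #R).trans hc.le
      have hRc : #R ≤ c := (self_le_add_right #R ℵ₀).trans hc.le
      have : Infinite c.out := by rw [infinite_iff, mk_out]; exact hcω
      have h1 : #(c.out →₀ R) = c := by
        rw [mk_finsupp_of_infinite, mk_out]
        exact max_eq_left hRc
      have h2 : #(P × (c.out →₀ R)) = c := by
        rw [mk_prod, lift_id, lift_id, h1]
        exact mul_eq_right hcω (hP.trans hc.le) (mk_ne_zero P)
      obtain ⟨e⟩ := hcat (ModuleCat.of R (P × (c.out →₀ R))) (ModuleCat.of R (c.out →₀ R))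
        (hPf.prod (eqFlat_finsupp _)).isFlat (eqFlat_finsupp _).isFlat h2 h1
      have : Module.Projective R (P × (c.out →₀ R)) :=
        Module.Projective.of_equiv (M := (c.out →₀ R)) e.symm
      exact Module.Projective.of_split (LinearMap.inl R P (c.out →₀ R))
        (LinearMap.fst R P (c.out →₀ R)) (by ext; simp)
  exact ⟨fun M _ _ _ hM => main M hM, main⟩
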